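/- arXiv:1909.12225 — 8 statements merged into one kernel-verified Lean document; each statement's English description precedes it below -/
import Mathlib

section
/- Let X be a metric space, Y a compact subset of X, r > 0 and μ > 0 real numbers, and n ≥ 1 an integer. Assume that every closed metric ball B of radius r in X satisfies HC_{n+1}(B ∩ Y) < (r/(4(n+1)))^{n+1} − μ. Set μ₁ = r/(4(n+1)) − ((r/(4(n+1)))^n − 4(n+1)μ/r)^{1/n}. Suppose Z is an r-separating set for Y that is (r/(4(n+1)) − μ₁, n, 4(n+1)μ/r)-minimal. Then for every closed metric ball β of radius ρ = r(1 − 1/(n+1)) in X one has HC_n(Z ∩ β) < (ρ/(4n))^n. -/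
/-!
Write `a = r / (4(m+1))`, so that the radius `ρ` of the ball `B(c, ρ)` is `r - 4a` and
`ρ / (4m) = a`, and let `b` be the bound on the radii, so that `b ^ m + μ / a = a ^ m`.

Cover `B(c, r) ∩ Y` by balls with `∑ rᵢ ^ (m+1) < a ^ (m+1) - μ = a * b ^ m`. The radii `t` for
which the sphere of radius `t` about `c` meets the `i`-th ball lie in an interval of length `2 rᵢ`.
Averaging over `t ∈ [r - 2a, r]` gives a sphere meeting only balls with `∑ rᵢ ^ m < b ^ m`; in
particular these balls have radii below `b`.

Replacing the part of `Z` inside that sphere by the sphere's intersection with `Y` gives another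
`r`-separating set. Given a covering of `Z` by balls of radii `≤ b`, those meeting `B(c, ρ)` lie in
`B(c, ρ + 2b)`, and `ρ + 2b ≤ r - 2a` because `b ≤ a`; hence the new set is covered by the others
and by the balls meeting the sphere. Minimality of `Z` up to `μ / a` therefore bounds the content
of `Z ∩ B(c, ρ)` by the contribution of the sphere plus `μ / a`, which is less than
`b ^ m + μ / a = a ^ m`.
-/

open Metric Set
open scoped ENNReal NNReal

/-- The `m`-dimensional Hausdorff content of a subset `A` of a metric space `X`:
the infimum, over all countable coverings of `A` by closed metric balls of `X` with
radii `r_i`, of `∑ r_i ^ m`. -/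
noncomputable def HC {X : Type*} [MetricSpace X] (m : ℝ) (A : Set X) : ℝ≥0∞ :=
  ⨅ (S : Set (X × ℝ≥0)) (_ : S.Countable)
    (_ : A ⊆ ⋃ p ∈ S, Metric.closedBall p.1 (p.2 : ℝ)),
    ∑' p : S, ((p : X × ℝ≥0).2 : ℝ≥0∞) ^ m


/-- The `n`-dimensional Hausdorff content with radii bounded by `b`: the infimum of
`∑ r_i ^ n` over all countable coverings of `Z` by closed balls of `X` with radii
`r_i ≤ b`. -/
noncomputable def HCb {X : Type*} [MetricSpace X] (b : ℝ) (m : ℝ) (Z : Set X) : ℝ≥0∞ :=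
  ⨅ (S : Set (X × ℝ≥0)) (_ : S.Countable) (_ : ∀ p ∈ S, (p.2 : ℝ) ≤ b)
    (_ : Z ⊆ ⋃ p ∈ S, Metric.closedBall p.1 (p.2 : ℝ)),
    ∑' p : S, ((p : X × ℝ≥0).2 : ℝ≥0∞) ^ m

/-- `Z` is an `r`-separating set for `Y`: `Z` is a compact subset of `Y` and every
connected component of `Y \ Z` is contained in a closed metric ball of `X` of radius
at most `r`. -/
def IsSeparating {X : Type*} [MetricSpace X] (r : ℝ) (Y Z : Set X) : Prop :=
  Z ⊆ Y ∧ IsCompact Z ∧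
    ∀ x ∈ Y \ Z, ∃ c : X, connectedComponentIn (Y \ Z) x ⊆ Metric.closedBall c r

/-- `I_Y(r, b, n)`: the infimum of `HC_n^{(b)}(Z)` over all `r`-separating sets `Z`
for `Y`. -/
noncomputable def sepInf {X : Type*} [MetricSpace X] (r b m : ℝ) (Y : Set X) : ℝ≥0∞ :=
  ⨅ (Z : Set X) (_ : IsSeparating r Y Z), HCb b m Z

theorem exists_mem_lt_of_setLIntegral_lt {α : Type*} [MeasurableSpace α]
    {μ : MeasureTheory.Measure α} {s : Set α} {f : α → ℝ≥0∞} {K : ℝ≥0∞} (hs : MeasurableSet s)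
    (h : ∫⁻ x in s, f x ∂μ < K * μ s) : ∃ x ∈ s, f x < K := by
  by_contra! hK
  refine h.not_ge ?_
  rw [← MeasureTheory.setLIntegral_const]
  exact MeasureTheory.setLIntegral_mono' hs hK

section RadiusSum

variable {X : Type*} {m b : ℝ} {S : Set (X × ℝ≥0)} {p : X × ℝ≥0}

/-- The sum `∑ rᵢ ^ m` over a family of balls: the quantity that Hausdorff contents minimize. -/
noncomputable def radiusSum (m : ℝ) (S : Set (X × ℝ≥0)) : ℝ≥0∞ :=
  ∑' p : S, ((p : X × ℝ≥0).2 : ℝ≥0∞) ^ m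

theorem radiusSum_union_le (m : ℝ) (S T : Set (X × ℝ≥0)) :
    radiusSum m (S ∪ T) ≤ radiusSum m S + radiusSum m T :=
  ENNReal.tsum_union_le (fun p : X × ℝ≥0 => (p.2 : ℝ≥0∞) ^ m) S T

theorem radiusSum_inter_add_sdiff (m : ℝ) (S T : Set (X × ℝ≥0)) :
    radiusSum m (S ∩ T) + radiusSum m (S \ T) = radiusSum m S := by
  conv_rhs => rw [← inter_union_sdiff S T]
  exact (ENNReal.summable.tsum_union_disjoint (f := fun p : X × ℝ≥0 => (p.2 : ℝ≥0∞) ^ m)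
    (disjoint_sdiff_right.mono_left inter_subset_right) ENNReal.summable).symm

theorem rpow_radius_le_radiusSum (hp : p ∈ S) : (p.2 : ℝ≥0∞) ^ m ≤ radiusSum m S :=
  ENNReal.le_tsum (f := fun q : S => ((q : X × ℝ≥0).2 : ℝ≥0∞) ^ m) ⟨p, hp⟩

theorem radius_lt_of_radiusSum_lt (hm : 0 ≤ m) (h : radiusSum m S < ENNReal.ofReal b ^ m)
    (hp : p ∈ S) : (p.2 : ℝ) < b := by
  by_contra! hbp
  refine h.not_ge (le_trans ?_ (rpow_radius_le_radiusSum hp))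
  rw [← ENNReal.ofReal_coe_nnreal]
  gcongr

theorem radiusSum_lt_top_of_finite (hm : 0 ≤ m) (hS : S.Finite) : radiusSum m S < ⊤ := by
  have := hS.fintype
  rw [radiusSum, tsum_fintype]
  exact ENNReal.sum_lt_top.mpr fun p _ => ENNReal.rpow_lt_top_of_nonneg hm ENNReal.coe_ne_top

end RadiusSum

section PseudoMetric

variable {X : Type*} [PseudoMetricSpace X]

/-- A countable family `S` of closed balls, encoded as pairs (centre, radius), covering `A`: the
coverings over which Hausdorff contents are infima. -/
def IsBallCover (S : Set (X × ℝ≥0)) (A : Set X) : Prop :=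
  S.Countable ∧ A ⊆ ⋃ p ∈ S, closedBall p.1 (p.2 : ℝ)

/-- The balls, encoded as pairs (centre, radius), that intersect `A`; used to select from a
covering the balls relevant to `A`. -/
def ballsMeeting (A : Set X) : Set (X × ℝ≥0) :=
  {p | (closedBall p.1 (p.2 : ℝ) ∩ A).Nonempty}

section BallCover

variable {S T : Set (X × ℝ≥0)} {A B : Set X} {c : X} {b ρ t : ℝ}

theorem IsBallCover.mono (hS : IsBallCover S B) (hAB : A ⊆ B) : IsBallCover S A :=
  ⟨hS.1, hAB.trans hS.2⟩

theorem IsBallCover.union (hS : IsBallCover S A) (hT : IsBallCover T B) :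
    IsBallCover (S ∪ T) (A ∪ B) :=
  ⟨hS.1.union hT.1, by rw [biUnion_union]; exact union_subset_union hS.2 hT.2⟩

theorem IsBallCover.inter_ballsMeeting (hS : IsBallCover S A) (B : Set X) :
    IsBallCover (S ∩ ballsMeeting B) (A ∩ B) := by
  refine ⟨hS.1.mono inter_subset_left, ?_⟩
  rintro z ⟨hzA, hzB⟩
  obtain ⟨p, hp, hzp⟩ := mem_iUnion₂.mp (hS.2 hzA)
  exact mem_iUnion₂.mpr ⟨p, ⟨hp, z, hzp, hzB⟩, hzp⟩

theorem closedBall_subset_of_mem_ballsMeeting {p : X × ℝ≥0}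
    (hp : p ∈ ballsMeeting (closedBall c ρ)) :
    closedBall p.1 (p.2 : ℝ) ⊆ closedBall c (ρ + 2 * p.2) := by
  obtain ⟨y, hyp, hyc⟩ := hp
  intro z hzp
  rw [mem_closedBall] at *
  linarith [dist_triangle4 z p.1 y c, dist_comm p.1 y]

theorem IsBallCover.sdiff_ballsMeeting (hS : IsBallCover S A) (hSb : ∀ p ∈ S, (p.2 : ℝ) ≤ b)
    (ht : ρ + 2 * b ≤ t) :
    IsBallCover (S \ ballsMeeting (closedBall c ρ)) (A \ closedBall c t) := by
  refine ⟨hS.1.mono sdiff_subset, ?_⟩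
  rintro z ⟨hzA, hzt⟩
  obtain ⟨p, hp, hzp⟩ := mem_iUnion₂.mp (hS.2 hzA)
  refine mem_iUnion₂.mpr ⟨p, ⟨hp, fun hpc => hzt ?_⟩, hzp⟩
  exact closedBall_subset_closedBall (by linarith [hSb p hp])
    (closedBall_subset_of_mem_ballsMeeting hpc hzp)

theorem exists_finite_isBallCover (hA : IsCompact A) (hb : 0 < b) :
    ∃ S : Set (X × ℝ≥0), S.Finite ∧ IsBallCover S A ∧ ∀ p ∈ S, (p.2 : ℝ) ≤ b := by
  obtain ⟨s, -, hs, hAs⟩ := hA.finite_cover_balls hb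
  refine ⟨(·, b.toNNReal) '' s, hs.image _, ⟨(hs.image _).countable, ?_⟩, ?_⟩
  · rw [biUnion_image]
    refine hAs.trans (iUnion₂_mono fun x _ => ?_)
    simpa only [Real.coe_toNNReal b hb.le] using ball_subset_closedBall
  · rintro _ ⟨x, -, rfl⟩
    exact (Real.coe_toNNReal b hb.le).le

end BallCover

section Averaging

variable {m u v : ℝ} {S : Set (X × ℝ≥0)} {K : ℝ≥0∞} {c : X}

theorem mem_closedBall_dist_of_mem_ballsMeeting_sphere {t : ℝ} {p : X × ℝ≥0}
    (hp : p ∈ ballsMeeting (sphere c t)) : t ∈ closedBall (dist p.1 c) (p.2 : ℝ) := by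
  obtain ⟨y, hyp, rfl⟩ := hp
  exact (abs_dist_sub_le y p.1 c).trans hyp

theorem radiusSum_inter_ballsMeeting_sphere_le (m : ℝ) (S : Set (X × ℝ≥0)) (c : X) (t : ℝ) :
    radiusSum m (S ∩ ballsMeeting (sphere c t)) ≤
      ∑' p : S, (closedBall (dist (p : X × ℝ≥0).1 c) ((p : X × ℝ≥0).2 : ℝ)).indicator
        (fun _ => ((p : X × ℝ≥0).2 : ℝ≥0∞) ^ m) t := by
  rw [radiusSum, tsum_subtype _ fun p : X × ℝ≥0 => (p.2 : ℝ≥0∞) ^ m, ← indicator_indicator,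
    ← tsum_subtype]
  refine ENNReal.tsum_le_tsum fun p => ?_
  refine indicator_apply_le' (fun hp => ?_) fun _ => zero_le
  rw [indicator_of_mem (mem_closedBall_dist_of_mem_ballsMeeting_sphere hp)]

/-- A ball of radius `s` meets spheres only for `t` in an interval of length `2 s`, which turns
`s ^ m` into `2 s ^ (m + 1)`. -/
theorem lintegral_radiusSum_inter_ballsMeeting_sphere_le (hm : 0 ≤ m) (hS : S.Countable) (c : X) :
    ∫⁻ t : ℝ, radiusSum m (S ∩ ballsMeeting (sphere c t)) ≤ 2 * radiusSum (m + 1) S := by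
  have := hS.to_subtype
  calc ∫⁻ t : ℝ, radiusSum m (S ∩ ballsMeeting (sphere c t))
    _ ≤ ∫⁻ t : ℝ, ∑' p : S,
          (closedBall (dist (p : X × ℝ≥0).1 c) ((p : X × ℝ≥0).2 : ℝ)).indicator
            (fun _ => ((p : X × ℝ≥0).2 : ℝ≥0∞) ^ m) t :=
        MeasureTheory.lintegral_mono fun t => radiusSum_inter_ballsMeeting_sphere_le m S c t
    _ = ∑' p : S, ∫⁻ t : ℝ,
          (closedBall (dist (p : X × ℝ≥0).1 c) ((p : X × ℝ≥0).2 : ℝ)).indicator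
            (fun _ => ((p : X × ℝ≥0).2 : ℝ≥0∞) ^ m) t :=
        MeasureTheory.lintegral_tsum fun p =>
          (measurable_const.indicator measurableSet_closedBall).aemeasurable
    _ = ∑' p : S, 2 * ((p : X × ℝ≥0).2 : ℝ≥0∞) ^ (m + 1) := by
        refine tsum_congr fun p => ?_
        rw [MeasureTheory.lintegral_indicator_const measurableSet_closedBall,
          Real.volume_closedBall, ENNReal.ofReal_mul zero_le_two, ENNReal.ofReal_coe_nnreal,
          ENNReal.ofReal_ofNat, ENNReal.rpow_add_of_nonneg _ _ hm zero_le_one, ENNReal.rpow_one]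
        ring
    _ = 2 * radiusSum (m + 1) S := ENNReal.tsum_mul_left

theorem exists_radiusSum_inter_ballsMeeting_sphere_lt (hm : 0 ≤ m) (hS : S.Countable) (c : X)
    (h : 2 * radiusSum (m + 1) S < K * ENNReal.ofReal (v - u)) :
    ∃ t ∈ Icc u v, radiusSum m (S ∩ ballsMeeting (sphere c t)) < K := by
  refine exists_mem_lt_of_setLIntegral_lt (μ := MeasureTheory.volume) measurableSet_Icc ?_
  calc ∫⁻ t in Icc u v, radiusSum m (S ∩ ballsMeeting (sphere c t))
    _ ≤ ∫⁻ t : ℝ, radiusSum m (S ∩ ballsMeeting (sphere c t)) :=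
        MeasureTheory.setLIntegral_le_lintegral _ _
    _ ≤ 2 * radiusSum (m + 1) S := lintegral_radiusSum_inter_ballsMeeting_sphere_le hm hS c
    _ < K * MeasureTheory.volume (Icc u v) := by rwa [Real.volume_Icc]

end Averaging

section SphereCut

variable {s Y Z : Set X} {c : X} {t : ℝ}

/-- The set obtained from `Z` by cutting along a sphere: the part of `Z` in the open ball
`ball c t` is replaced by the intersection of the sphere with the ambient set `Y`. -/
def sphereCut (Y Z : Set X) (c : X) (t : ℝ) : Set X :=
  (Z \ ball c t) ∪ (sphere c t ∩ Y)

theorem sphereCut_subset (hZY : Z ⊆ Y) :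
    sphereCut Y Z c t ⊆ (Z \ closedBall c t) ∪ (sphere c t ∩ Y) := by
  rintro z (⟨hzZ, hzt⟩ | hz)
  · have htz : t ≤ dist z c := not_lt.mp fun hlt => hzt hlt
    rcases htz.eq_or_lt with heq | hlt
    · exact Or.inr ⟨heq.symm, hZY hzZ⟩
    · exact Or.inl ⟨hzZ, hlt.not_ge⟩
  · exact Or.inr hz

theorem subset_ball_or_subset_compl_closedBall (hs : IsPreconnected s)
    (hst : Disjoint s (sphere c t)) : s ⊆ ball c t ∨ s ⊆ (closedBall c t)ᶜ := by
  refine hs.subset_or_subset isOpen_ball isClosed_closedBall.isOpen_compl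
    (disjoint_compl_right_iff_subset.mpr ball_subset_closedBall) fun y hy => ?_
  have hyt : dist y c ≠ t := disjoint_left.mp hst hy
  exact hyt.lt_or_gt.imp id not_le.mpr

end SphereCut

end PseudoMetric

section Metric

variable {X : Type*} [MetricSpace X]

section HausdorffContent

variable {m b : ℝ} {S : Set (X × ℝ≥0)} {A B : Set X} {K : ℝ≥0∞}

theorem HC_lt_iff : HC m A < K ↔ ∃ S, IsBallCover S A ∧ radiusSum m S < K := by
  simp only [HC, iInf_lt_iff, IsBallCover, radiusSum, exists_prop, and_assoc]

theorem HC_le_radiusSum (hS : IsBallCover S A) : HC m A ≤ radiusSum m S :=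
  iInf₂_le_of_le S hS.1 (iInf_le _ hS.2)

theorem HC_mono (hAB : A ⊆ B) : HC m A ≤ HC m B :=
  le_of_forall_gt fun _ hK =>
    let ⟨S, hS, hSK⟩ := HC_lt_iff.mp hK
    HC_lt_iff.mpr ⟨S, hS.mono hAB, hSK⟩

theorem le_HCb_iff :
    K ≤ HCb b m A ↔
      ∀ S, IsBallCover S A → (∀ p ∈ S, (p.2 : ℝ) ≤ b) → K ≤ radiusSum m S := by
  simp only [HCb, le_iInf_iff, IsBallCover, radiusSum, and_imp]
  exact forall₂_congr fun S _ => forall_comm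

theorem HCb_le_radiusSum (hS : IsBallCover S A) (hSb : ∀ p ∈ S, (p.2 : ℝ) ≤ b) :
    HCb b m A ≤ radiusSum m S :=
  le_HCb_iff.mp le_rfl S hS hSb

theorem HCb_lt_top_of_isCompact (hA : IsCompact A) (hb : 0 < b) (hm : 0 ≤ m) :
    HCb b m A < ⊤ := by
  obtain ⟨S, hfin, hS, hSb⟩ := exists_finite_isBallCover hA hb
  exact (HCb_le_radiusSum hS hSb).trans_lt (radiusSum_lt_top_of_finite hm hfin)

end HausdorffContent

section Cutting

variable {m b r ρ t : ℝ} {Y Z : Set X} {c : X} {T : Set (X × ℝ≥0)}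

theorem isSeparating_sphereCut (hZ : IsSeparating r Y Z) (hY : IsCompact (sphere c t ∩ Y))
    (htr : t ≤ r) : IsSeparating r Y (sphereCut Y Z c t) := by
  obtain ⟨hZY, hZc, hcomp⟩ := hZ
  refine ⟨union_subset (sdiff_subset.trans hZY) inter_subset_right,
    (hZc.diff isOpen_ball).union hY, fun x hx => ?_⟩
  set C := connectedComponentIn (Y \ sphereCut Y Z c t) x
  have hC : IsPreconnected C := isPreconnected_connectedComponentIn
  have hxC : x ∈ C := mem_connectedComponentIn hx
  have hCY : C ⊆ Y \ sphereCut Y Z c t := connectedComponentIn_subset _ x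
  have hCt : Disjoint C (sphere c t) :=
    disjoint_left.mpr fun y hy hyt => (hCY hy).2 (Or.inr ⟨hyt, (hCY hy).1⟩)
  rcases subset_ball_or_subset_compl_closedBall hC hCt with hin | hout
  · exact ⟨c, hin.trans (ball_subset_closedBall.trans (closedBall_subset_closedBall htr))⟩
  · have hCZ : C ⊆ Y \ Z := fun y hy => ⟨(hCY hy).1, fun hyZ =>
      (hCY hy).2 (Or.inl ⟨hyZ, fun hyt => hout hy (ball_subset_closedBall hyt)⟩)⟩
    obtain ⟨c', hc'⟩ := hcomp x (hCZ hxC)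
    exact ⟨c', (hC.subset_connectedComponentIn hxC hCZ).trans hc'⟩

theorem sepInf_le_HCb (hZ : IsSeparating r Y Z) : sepInf r b m Y ≤ HCb b m Z :=
  iInf₂_le Z hZ

/-- In any covering of `Z`, the balls meeting `closedBall c ρ` can be traded for `T` to cover
`sphereCut Y Z c t`. -/
theorem HC_inter_closedBall_add_sepInf_le (hZ : IsSeparating r Y Z)
    (hY : IsCompact (sphere c t ∩ Y)) (htr : t ≤ r) (ht : ρ + 2 * b ≤ t)
    (hT : IsBallCover T (sphere c t ∩ Y)) (hTb : ∀ p ∈ T, (p.2 : ℝ) ≤ b) :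
    HC m (Z ∩ closedBall c ρ) + sepInf r b m Y ≤ HCb b m Z + radiusSum m T := by
  rw [← tsub_le_iff_right, le_HCb_iff]
  intro S hS hSb
  rw [tsub_le_iff_right]
  set M : Set (X × ℝ≥0) := ballsMeeting (closedBall c ρ)
  have hcover : IsBallCover (S \ M ∪ T) (sphereCut Y Z c t) :=
    ((hS.sdiff_ballsMeeting hSb ht).union hT).mono (sphereCut_subset hZ.1)
  have hradii : ∀ p ∈ S \ M ∪ T, (p.2 : ℝ) ≤ b := by
    rintro p (hp | hp)
    exacts [hSb p hp.1, hTb p hp]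
  calc HC m (Z ∩ closedBall c ρ) + sepInf r b m Y
    _ ≤ radiusSum m (S ∩ M) + radiusSum m (S \ M ∪ T) := add_le_add
        (HC_le_radiusSum (hS.inter_ballsMeeting _))
        ((sepInf_le_HCb (isSeparating_sphereCut hZ hY htr)).trans (HCb_le_radiusSum hcover hradii))
    _ ≤ radiusSum m (S ∩ M) + (radiusSum m (S \ M) + radiusSum m T) := by
        gcongr
        exact radiusSum_union_le m _ _
    _ = radiusSum m S + radiusSum m T := by
        rw [← add_assoc, radiusSum_inter_add_sdiff]

end Cutting

section Minimal

variable {m a b r μ μ₁ : ℝ} {δ : ℝ≥0∞} {Y Z : Set X} {c : X}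

theorem HC_inter_closedBall_lt (hm : 0 ≤ m) (hb : 0 < b) (hδ : δ ≠ ⊤)
    (hY : IsCompact (closedBall c r ∩ Y))
    (hball : HC (m + 1) (closedBall c r ∩ Y) < ENNReal.ofReal a * ENNReal.ofReal b ^ m)
    (hZ : IsSeparating r Y Z) (hmin : HCb b m Z ≤ sepInf r b m Y + δ) :
    HC m (Z ∩ closedBall c (r - 2 * a - 2 * b)) < ENNReal.ofReal b ^ m + δ := by
  obtain ⟨S, hS, hSsum⟩ := HC_lt_iff.mp hball
  have haverage : 2 * radiusSum (m + 1) S <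
      ENNReal.ofReal b ^ m * ENNReal.ofReal (r - (r - 2 * a)) := by
    rw [sub_sub_cancel, ENNReal.ofReal_mul zero_le_two, ENNReal.ofReal_ofNat, mul_left_comm,
      mul_comm (ENNReal.ofReal b ^ m)]
    exact ENNReal.mul_lt_mul_right two_ne_zero ENNReal.ofNat_ne_top hSsum
  obtain ⟨t, ⟨hat, htr⟩, htsum⟩ :=
    exists_radiusSum_inter_ballsMeeting_sphere_lt hm hS.1 c haverage
  have hsphere : closedBall c r ∩ Y ∩ sphere c t = sphere c t ∩ Y := by
    rw [inter_right_comm, inter_eq_right.mpr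
      (sphere_subset_closedBall.trans (closedBall_subset_closedBall htr))]
  have hcompare : HC m (Z ∩ closedBall c (r - 2 * a - 2 * b)) + sepInf r b m Y ≤
      HCb b m Z + radiusSum m (S ∩ ballsMeeting (sphere c t)) :=
    HC_inter_closedBall_add_sepInf_le hZ (hsphere ▸ hY.inter_right isClosed_sphere) htr
      (by linarith) (hsphere ▸ hS.inter_ballsMeeting (sphere c t))
      fun p hp => (radius_lt_of_radiusSum_lt hm htsum hp).le
  have hsepInf : sepInf r b m Y ≠ ⊤ :=
    ((sepInf_le_HCb hZ).trans_lt (HCb_lt_top_of_isCompact hZ.2.1 hb hm)).ne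
  calc HC m (Z ∩ closedBall c (r - 2 * a - 2 * b))
    _ ≤ radiusSum m (S ∩ ballsMeeting (sphere c t)) + δ := by
        rw [← ENNReal.add_le_add_iff_right hsepInf]
        refine hcompare.trans ((add_le_add_left hmin _).trans_eq ?_)
        ring
    _ < ENNReal.ofReal b ^ m + δ := ENNReal.add_lt_add_right hδ htsum

theorem stmt8_general (hm : 0 < m) (hr : 0 < r) (hμ : 0 ≤ μ)
    (hY : IsCompact (closedBall c r ∩ Y))
    (hball : HC (m + 1) (closedBall c r ∩ Y) <
      ENNReal.ofReal ((r / (4 * (m + 1))) ^ (m + 1) - μ))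
    (hμ₁ : μ₁ = r / (4 * (m + 1)) -
      ((r / (4 * (m + 1))) ^ m - 4 * (m + 1) * μ / r) ^ m⁻¹)
    (hZ : IsSeparating r Y Z)
    (hmin : HCb (r / (4 * (m + 1)) - μ₁) m Z ≤
      sepInf r (r / (4 * (m + 1)) - μ₁) m Y + ENNReal.ofReal (4 * (m + 1) * μ / r)) :
    HC m (Z ∩ closedBall c (r * (1 - 1 / (m + 1)))) <
      ENNReal.ofReal ((r * (1 - 1 / (m + 1)) / (4 * m)) ^ m) := by
  have hρa : r * (1 - 1 / (m + 1)) / (4 * m) = r / (4 * (m + 1)) := by field_simp; ring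
  have hρ : r * (1 - 1 / (m + 1)) = r - 4 * (r / (4 * (m + 1))) := by field_simp
  have hδ : 4 * (m + 1) * μ / r = μ / (r / (4 * (m + 1))) := by field_simp
  have ha : 0 < r / (4 * (m + 1)) := by positivity
  rw [hρa, hρ]
  rw [hδ] at hmin hμ₁
  set a := r / (4 * (m + 1))
  set b := a - μ₁ with hb_def
  have hfactor : a ^ (m + 1) - μ = a * (a ^ m - μ / a) := by
    rw [Real.rpow_add_one ha.ne']
    field_simp
  have hpos : 0 < a ^ m - μ / a :=
    pos_of_mul_pos_right (hfactor ▸ ENNReal.ofReal_pos.mp hball.pos) ha.le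
  have hb_eq : b = (a ^ m - μ / a) ^ m⁻¹ := by rw [hb_def, hμ₁, sub_sub_cancel]
  have hb : 0 < b := hb_eq ▸ Real.rpow_pos_of_pos hpos _
  have hbm : b ^ m = a ^ m - μ / a := by rw [hb_eq, Real.rpow_inv_rpow hpos.le hm.ne']
  have hba : b ≤ a := by
    rw [← Real.rpow_le_rpow_iff hb.le ha.le hm, hbm]
    exact sub_le_self _ (by positivity)
  rw [hfactor, ← hbm, ENNReal.ofReal_mul ha.le, ← ENNReal.ofReal_rpow_of_pos hb] at hball
  calc HC m (Z ∩ closedBall c (r - 4 * a))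
    _ ≤ HC m (Z ∩ closedBall c (r - 2 * a - 2 * b)) :=
        HC_mono (inter_subset_inter_right Z (closedBall_subset_closedBall (by linarith)))
    _ < ENNReal.ofReal b ^ m + ENNReal.ofReal (μ / a) :=
        HC_inter_closedBall_lt hm.le hb ENNReal.ofReal_ne_top hY hball hZ hmin
    _ = ENNReal.ofReal (a ^ m) := by
        rw [ENNReal.ofReal_rpow_of_pos hb, ← ENNReal.ofReal_add (by positivity) (by positivity),
          hbm, sub_add_cancel]

end Minimal

end Metric

/-- Key lemma: let `Y ⊆ X` be compact, `n ≥ 1`, `r, μ > 0`, and suppose every closed ball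
`B` of radius `r` in `X` satisfies `HC_{n+1}(B ∩ Y) < (r/(4(n+1)))^{n+1} − μ`. Set
`μ₁ = r/(4(n+1)) − ((r/(4(n+1)))^n − 4(n+1)μ/r)^{1/n}`. If `Z` is an `r`-separating set
for `Y` which is `(r/(4(n+1)) − μ₁, n, 4(n+1)μ/r)`-minimal, then every closed ball `β` of
radius `ρ = r(1 − 1/(n+1))` satisfies `HC_n(Z ∩ β) < (ρ/(4n))^n`. -/
theorem stmt8 {X : Type*} [MetricSpace X] (Y : Set X) (hY : IsCompact Y)
    (n : ℕ) (hn : 1 ≤ n) (r μ μ₁ : ℝ) (hr : 0 < r) (hμ : 0 < μ)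
    (hball : ∀ x : X, HC ((n : ℝ) + 1) (Metric.closedBall x r ∩ Y) <
      ENNReal.ofReal ((r / (4 * ((n : ℝ) + 1))) ^ (n + 1) - μ))
    (hμ₁ : μ₁ = r / (4 * ((n : ℝ) + 1)) -
      ((r / (4 * ((n : ℝ) + 1))) ^ n - 4 * ((n : ℝ) + 1) * μ / r) ^ ((n : ℝ)⁻¹))
    (Z : Set X) (hZ : IsSeparating r Y Z)
    (hmin : HCb (r / (4 * ((n : ℝ) + 1)) - μ₁) (n : ℝ) Z ≤
      sepInf r (r / (4 * ((n : ℝ) + 1)) - μ₁) (n : ℝ) Y +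
        ENNReal.ofReal (4 * ((n : ℝ) + 1) * μ / r)) :
    ∀ c : X, HC (n : ℝ) (Z ∩ Metric.closedBall c (r * (1 - 1 / ((n : ℝ) + 1)))) <
      ENNReal.ofReal ((r * (1 - 1 / ((n : ℝ) + 1)) / (4 * n)) ^ n) := by
  intro c
  simp only [← Real.rpow_natCast, Nat.cast_succ] at hball hμ₁ ⊢
  exact stmt8_general (Nat.cast_pos.mpr hn) hr hμ.le (hY.inter_left isClosed_closedBall)
    (hball c) hμ₁ hZ hmin
end

section
/- Let X be a boundedly compact metric space, Y a closed subset of X, x ∈ X, 0 ≤ r₁ < r₂, and m > 0. Let (β_i) be a countable family of closed metric balls of X with radii (r_i). For s ∈ (r₁, r₂) define F(s) = Σ_i r_i^{m−1}·χ_i(s), where χ_i(s) = 1 if β_i ∩ S(x,s) ∩ Y ≠ ∅ and χ_i(s) = 0 otherwise (here S(x,s) = {y : d(x,y) = s}). Then each set {s : χ_i(s) = 1} is contained in an interval of length at most 2r_i, F is Lebesgue measurable on (r₁, r₂), and ∫_{r₁}^{r₂} F(s) ds ≤ 2·Σ_i r_i^m. -/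
/-!
The set of `s` for which `S(x, s)` meets `β ∩ Y` is the image of `β ∩ Y` under the `1`-Lipschitz
function `dist x`. A `K`-Lipschitz function `f` maps a ball of radius `r` into an interval of length
`2 K r`, so integrating the weighted sum of the indicators of the images term by term gives at most
`∑ r_i ^ (m - 1) * 2 K r_i`. A closed subset `Y` of a boundedly compact space is σ-compact, so the
image of `β ∩ Y` is σ-compact in `ℝ`, hence Borel.
-/

open Metric Set MeasureTheory
open scoped ENNReal NNReal

lemma measurable_tsum_const_mul_indicator_one {α ι : Type*} [Countable ι] [MeasurableSpace α]
    {A : ι → Set α} (hA : ∀ i, MeasurableSet (A i)) (w : ι → ℝ≥0∞) :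
    Measurable fun s => ∑' i, w i * (A i).indicator 1 s :=
  Measurable.tsum fun i => (measurable_one.indicator (hA i)).const_mul (w i)

lemma lintegral_tsum_const_mul_indicator_one_le {α ι : Type*} [Countable ι] [MeasurableSpace α]
    (μ : Measure α) (A : ι → Set α) (w : ι → ℝ≥0∞) :
    ∫⁻ s, ∑' i, w i * (A i).indicator 1 s ∂μ ≤ ∑' i, w i * μ (A i) := by
  -- `∫⁻` is not subadditive on nonmeasurable functions, so each `A i` is replaced by a hull.
  have hmeas (i : ι) : Measurable ((toMeasurable μ (A i)).indicator (1 : α → ℝ≥0∞)) :=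
    measurable_one.indicator (measurableSet_toMeasurable μ (A i))
  calc ∫⁻ s, ∑' i, w i * (A i).indicator 1 s ∂μ
      ≤ ∫⁻ s, ∑' i, w i * (toMeasurable μ (A i)).indicator 1 s ∂μ := by
        gcongr with s i
        exact subset_toMeasurable μ (A i)
    _ = ∑' i, ∫⁻ s, w i * (toMeasurable μ (A i)).indicator 1 s ∂μ :=
        lintegral_tsum fun i => ((hmeas i).const_mul (w i)).aemeasurable
    _ = ∑' i, w i * μ (A i) := by
        congr with i
        rw [lintegral_const_mul _ (hmeas i),
          lintegral_indicator_one (measurableSet_toMeasurable μ (A i)), measure_toMeasurable]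

-- Strict at `x = 0` for `m ≤ 0` and at `x = ∞` for `0 ≤ m < 1`, because `∞ * 0 = 0`.
lemma rpow_sub_one_mul_self_le (x : ℝ≥0∞) (m : ℝ) : x ^ (m - 1) * x ≤ x ^ m := by
  rcases eq_or_ne x 0 with rfl | hx₀
  · simp only [mul_zero, zero_le]
  rcases eq_or_ne x ∞ with rfl | hx_top
  · rcases lt_or_ge m 1 with hm | hm
    · simp only [ENNReal.top_rpow_of_neg (sub_neg.2 hm), zero_mul, zero_le]
    · simp only [ENNReal.top_rpow_of_pos (zero_lt_one.trans_le hm), le_top]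
  · refine le_of_eq ?_
    calc x ^ (m - 1) * x = x ^ (m - 1) * x ^ (1 : ℝ) := by rw [ENNReal.rpow_one]
      _ = x ^ m := by rw [← ENNReal.rpow_add _ _ hx₀ hx_top, sub_add_cancel]

lemma setOf_inter_fiber_inter_nonempty_eq_image {α β : Type*} (f : α → β) (A B : Set α) :
    {t : β | (A ∩ {y : α | f y = t} ∩ B).Nonempty} = f '' (A ∩ B) := by
  ext t
  exact exists_congr fun y => and_right_comm

lemma measurableSet_image_inter_of_isSigmaCompact {X Z : Type*} [TopologicalSpace X]
    [TopologicalSpace Z] [T2Space Z] [MeasurableSpace Z] [OpensMeasurableSpace Z] {f : X → Z}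
    (hf : Continuous f) {C Y : Set X} (hC : IsClosed C) (hY : IsSigmaCompact Y) :
    MeasurableSet (f '' (C ∩ Y)) := by
  obtain ⟨D, hD, rfl⟩ := hY
  rw [inter_iUnion, image_iUnion]
  exact MeasurableSet.iUnion fun n => (((hD n).inter_left hC).image hf).measurableSet

lemma isSigmaCompact_of_isClosed_of_isCompact_closedBall {X : Type*} [PseudoMetricSpace X]
    (hX : ∀ (z : X) (t : ℝ), IsCompact (closedBall z t)) {Y : Set X} (hY : IsClosed Y) :
    IsSigmaCompact Y :=
  have : ProperSpace X := ⟨hX⟩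
  isSigmaCompact_univ.of_isClosed_subset hY (subset_univ Y)

section Lipschitz

variable {X : Type*} [PseudoMetricSpace X] {f : X → ℝ} {K : ℝ≥0}

lemma image_subset_Icc_of_subset_closedBall (hf : LipschitzWith K f) {A : Set X} {c : X} {r : ℝ}
    (hA : A ⊆ closedBall c r) :
    f '' A ⊆ Icc (f c - K * r) (f c - K * r + 2 * (K * r)) :=
  calc f '' A ⊆ closedBall (f c) (K * r) := ((hf.mapsTo_closedBall c r).mono_left hA).image_subset
    _ = Icc (f c - K * r) (f c - K * r + 2 * (K * r)) := by
      rw [Real.closedBall_eq_Icc]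
      ring_nf

lemma volume_image_le_of_subset_closedBall (hf : LipschitzWith K f) {A : Set X} {c : X} {r : ℝ≥0}
    (hA : A ⊆ closedBall c r) : volume (f '' A) ≤ 2 * (K * r) :=
  calc volume (f '' A) ≤ volume (Icc (f c - K * r) (f c - K * r + 2 * (K * r))) :=
        measure_mono (image_subset_Icc_of_subset_closedBall hf hA)
    _ = 2 * (K * r) := by
      rw [Real.volume_Icc, add_sub_cancel_left, ENNReal.ofReal_mul zero_le_two,
        ENNReal.ofReal_mul K.coe_nonneg, ENNReal.ofReal_ofNat, ENNReal.ofReal_coe_nnreal,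
        ENNReal.ofReal_coe_nnreal]

lemma lintegral_tsum_rpow_mul_indicator_image_le {ι : Type*} [Countable ι]
    (hf : LipschitzWith K f) {A : ι → Set X} {c : ι → X} {r : ι → ℝ≥0}
    (hA : ∀ i, A i ⊆ closedBall (c i) (r i)) (m : ℝ) :
    ∫⁻ s, ∑' i, (r i : ℝ≥0∞) ^ (m - 1) * (f '' A i).indicator 1 s ≤
      2 * (K * ∑' i, (r i : ℝ≥0∞) ^ m) :=
  calc ∫⁻ s, ∑' i, (r i : ℝ≥0∞) ^ (m - 1) * (f '' A i).indicator 1 s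
      ≤ ∑' i, (r i : ℝ≥0∞) ^ (m - 1) * volume (f '' A i) :=
        lintegral_tsum_const_mul_indicator_one_le volume _ _
    _ ≤ ∑' i, (r i : ℝ≥0∞) ^ (m - 1) * (2 * (K * r i)) := by
        gcongr with i
        exact volume_image_le_of_subset_closedBall hf (hA i)
    _ = 2 * (K * ∑' i, (r i : ℝ≥0∞) ^ (m - 1) * r i) := by
        simp only [← ENNReal.tsum_mul_left, mul_left_comm]
    _ ≤ 2 * (K * ∑' i, (r i : ℝ≥0∞) ^ m) := by
        gcongr with i
        exact rpow_sub_one_mul_self_le (r i) m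

end Lipschitz

theorem stmt10_general {X ι : Type*} [PseudoMetricSpace X] [Countable ι]
    {Y : Set X} (hY : IsSigmaCompact Y) {f : X → ℝ} {K : ℝ≥0} (hf : LipschitzWith K f)
    (m : ℝ) (c : ι → X) (r : ι → ℝ≥0) (F : ℝ → ℝ≥0∞)
    (hF : ∀ s : ℝ, F s = ∑' i, (r i : ℝ≥0∞) ^ (m - 1) *
      {t : ℝ | (closedBall (c i) (r i) ∩ {y : X | f y = t} ∩ Y).Nonempty}.indicator 1 s) :
    (∀ i, ∃ a : ℝ, {s : ℝ | (closedBall (c i) (r i) ∩ {y : X | f y = s} ∩ Y).Nonempty} ⊆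
      Icc a (a + 2 * (K * r i))) ∧
    Measurable F ∧
    ∫⁻ s, F s ≤ 2 * (K * ∑' i, (r i : ℝ≥0∞) ^ m) := by
  simp only [setOf_inter_fiber_inter_nonempty_eq_image] at hF ⊢
  obtain rfl : F = _ := funext hF
  exact ⟨fun i => ⟨_, image_subset_Icc_of_subset_closedBall hf inter_subset_left⟩,
    measurable_tsum_const_mul_indicator_one
      (fun _ => measurableSet_image_inter_of_isSigmaCompact hf.continuous isClosed_closedBall hY) _,
    lintegral_tsum_rpow_mul_indicator_image_le hf (fun _ => inter_subset_left) m⟩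

/-- Let `X` be a boundedly compact metric space, `Y ⊆ X` closed, `x ∈ X`, `0 ≤ r₁ < r₂`,
`m > 0`, and let `(β_i)` be a countable family of closed balls with centers `c i` and radii
`ri i`. Define `F s = ∑_i (ri i)^{m−1} · χ_i(s)`, where `χ_i(s) = 1` iff
`β_i ∩ S(x,s) ∩ Y ≠ ∅`. Then each set `{s | χ_i(s) = 1}` lies in an interval of length at
most `2·ri i`, `F` is Lebesgue measurable on `(r₁, r₂)`, and
`∫_{r₁}^{r₂} F ≤ 2·∑_i (ri i)^m`. -/
theorem stmt10 {X : Type*} [MetricSpace X]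
    (hbc : ∀ (z : X) (t : ℝ), IsCompact (Metric.closedBall z t))
    (Y : Set X) (hY : IsClosed Y) (x : X)
    (r₁ r₂ : ℝ) (hr₁ : 0 ≤ r₁) (h₁₂ : r₁ < r₂)
    (m : ℝ) (hm : 0 < m) (c : ℕ → X) (ri : ℕ → ℝ≥0)
    (F : ℝ → ℝ≥0∞)
    (hF : ∀ s : ℝ, F s = ∑' i : ℕ, (ri i : ℝ≥0∞) ^ (m - 1) *
      Set.indicator {t : ℝ |
        (Metric.closedBall (c i) (ri i) ∩ {y : X | dist x y = t} ∩ Y).Nonempty}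
        (1 : ℝ → ℝ≥0∞) s) :
    (∀ i : ℕ, ∃ a : ℝ,
      {s ∈ Set.Ioo r₁ r₂ |
          (Metric.closedBall (c i) (ri i) ∩ {y : X | dist x y = s} ∩ Y).Nonempty}
        ⊆ Set.Icc a (a + 2 * ri i)) ∧
    AEMeasurable F (volume.restrict (Set.Ioo r₁ r₂)) ∧
    ∫⁻ s in Set.Ioo r₁ r₂, F s ≤ 2 * ∑' i : ℕ, (ri i : ℝ≥0∞) ^ m := by
  obtain ⟨hIcc, hmeas, hint⟩ :=
    stmt10_general (isSigmaCompact_of_isClosed_of_isCompact_closedBall hbc hY)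
      (LipschitzWith.dist_right x) m c ri F hF
  simp only [NNReal.coe_one, ENNReal.coe_one, one_mul] at hIcc hint
  exact ⟨fun i => (hIcc i).imp fun _ h => Subset.trans (fun _ hs => hs.2) h,
    hmeas.aemeasurable, (setLIntegral_le_lintegral _ F).trans hint⟩
end

section
/- Let X be a metric space, Y a subset of X, x ∈ Y, and r > 0. Assume that the closed metric ball B(x,r) satisfies HC_1(B(x,r) ∩ Y) < r/2. Then there exists ρ ∈ (0, r) such that the metric sphere S(x,ρ) = {y ∈ X : d(x,y) = ρ} is disjoint from Y. -/
open Metric Set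
open scoped ENNReal NNReal

/-!
The map `y ↦ d(x, y)` is 1-Lipschitz, so it sends a closed ball of radius `s` into an interval of
length `2s`. Hence the set of distances from `x` to points of `B(x, r) ∩ Y` has Lebesgue (outer)
measure at most `2 HC_1(B(x, r) ∩ Y) < r`, and so it cannot contain all of `(0, r)`.
-/

open MeasureTheory

section HausdorffContent

variable {X : Type*} [MetricSpace X]

theorem outerMeasure_div_le_HC (μ : OuterMeasure X) {m : ℝ} {C : ℝ≥0∞}
    (hμ : ∀ (c : X) (s : ℝ≥0), μ (closedBall c s) ≤ C * (s : ℝ≥0∞) ^ m) (A : Set X) :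
    μ A / C ≤ HC m A := by
  refine le_iInf fun S => le_iInf fun hS => le_iInf fun hcover => ENNReal.div_le_of_le_mul' ?_
  calc μ A ≤ μ (⋃ p ∈ S, closedBall p.1 (p.2 : ℝ)) := measure_mono hcover
    _ ≤ ∑' p : S, μ (closedBall p.1.1 (p.1.2 : ℝ)) := measure_biUnion_le μ hS _
    _ ≤ ∑' p : S, C * (p.1.2 : ℝ≥0∞) ^ m := ENNReal.tsum_le_tsum fun p => hμ p.1.1 p.1.2
    _ = C * ∑' p : S, (p.1.2 : ℝ≥0∞) ^ m := ENNReal.tsum_mul_left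

theorem measure_image_div_le_HC_of_lipschitzWith {Z : Type*} [PseudoMetricSpace Z]
    [MeasurableSpace Z] {μ : Measure Z} {m : ℝ} {C : ℝ≥0∞}
    (hμ : ∀ (z : Z) (s : ℝ≥0), μ (closedBall z s) ≤ C * (s : ℝ≥0∞) ^ m)
    {K : ℝ≥0} {f : X → Z} (hf : LipschitzWith K f) (A : Set X) :
    μ (f '' A) / (C * (K : ℝ≥0∞) ^ m) ≤ HC m A := by
  -- `B ↦ μ (f '' B)` is itself an outer measure on `X`, even where `f '' B` is not measurable.
  refine outerMeasure_div_le_HC (OuterMeasure.comap f μ.toOuterMeasure) (fun c s => ?_) A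
  calc μ (f '' closedBall c s) ≤ μ (closedBall (f c) (K * s : ℝ≥0)) :=
        measure_mono (hf.mapsTo_closedBall c s).image_subset
    _ ≤ C * ((K * s : ℝ≥0) : ℝ≥0∞) ^ m := hμ (f c) (K * s)
    _ = C * (K : ℝ≥0∞) ^ m * (s : ℝ≥0∞) ^ m := by
        rw [ENNReal.coe_mul, ENNReal.coe_mul_rpow, mul_assoc]

theorem volume_image_div_le_HC_one_of_lipschitzWith {K : ℝ≥0} {f : X → ℝ}
    (hf : LipschitzWith K f) (A : Set X) : volume (f '' A) / (2 * K) ≤ HC 1 A := by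
  have hvol (z : ℝ) (s : ℝ≥0) : volume (closedBall z (s : ℝ)) ≤ 2 * (s : ℝ≥0∞) ^ (1 : ℝ) := by
    simp [Real.volume_closedBall, ENNReal.ofReal_mul]
  simpa only [ENNReal.rpow_one] using measure_image_div_le_HC_of_lipschitzWith hvol hf A

end HausdorffContent

theorem stmt11_general {X : Type*} [MetricSpace X] (Y : Set X) (x : X) (r : ℝ)
    (hball : HC 1 (Metric.closedBall x r ∩ Y) < ENNReal.ofReal (r / 2)) :
    ∃ ρ : ℝ, 0 < ρ ∧ ρ < r ∧ {y : X | dist x y = ρ} ∩ Y = ∅ := by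
  by_contra! hmeets
  have hradii : Ioo 0 r ⊆ dist x '' (closedBall x r ∩ Y) := by
    rintro ρ ⟨hρ_pos, hρ_lt⟩
    obtain ⟨y, hyρ : dist x y = ρ, hyY⟩ := hmeets ρ hρ_pos hρ_lt
    exact ⟨y, ⟨mem_closedBall'.2 (hyρ.trans_le hρ_lt.le), hyY⟩, hyρ⟩
  refine hball.not_ge ?_
  calc ENNReal.ofReal (r / 2) = volume (Ioo 0 r) / 2 := by
        simp [ENNReal.ofReal_div_of_pos]
    _ ≤ volume (dist x '' (closedBall x r ∩ Y)) / 2 := by gcongr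
    _ ≤ HC 1 (closedBall x r ∩ Y) := by
        simpa using volume_image_div_le_HC_one_of_lipschitzWith (LipschitzWith.dist_right x)
          (closedBall x r ∩ Y)

/-- If `Y ⊆ X`, `x ∈ Y`, `r > 0` and `HC_1(B(x,r) ∩ Y) < r/2`, then there is a radius
`ρ ∈ (0, r)` such that the metric sphere `S(x,ρ)` is disjoint from `Y`. -/
theorem stmt11 {X : Type*} [MetricSpace X] (Y : Set X) (x : X) (hx : x ∈ Y)
    (r : ℝ) (hr : 0 < r)
    (hball : HC 1 (Metric.closedBall x r ∩ Y) < ENNReal.ofReal (r / 2)) :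
    ∃ ρ : ℝ, 0 < ρ ∧ ρ < r ∧ {y : X | dist x y = ρ} ∩ Y = ∅ :=
  stmt11_general Y x r hball
end

section
/- Let n ≥ 0 be an integer, c > 0, ε ∈ (0,1), and r > 0. Let f : (0, r) → [0, ∞] be a Lebesgue measurable function with ∫_0^r f(t) dt ≤ c·r^{n+1}·(1 − ε). Set λ = r·(ε/3)^{1/(n+1)}. Then the set { t ∈ (λ, r) : f(t) < (n+1)·c·t^n·(1 − ε/3) } has positive Lebesgue measure. -/
/-!
Put `δ = ε / 3`. The radius `λ` satisfies `λ ^ (n + 1) = δ * r ^ (n + 1)`, so the threshold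
`(n + 1) * c * t ^ n * (1 - δ)` has integral `c * r ^ (n + 1) * (1 - δ) ^ 2` over `(λ, r)`. Since
`1 - ε = 1 - 3 * δ < (1 - δ) ^ 2`, this exceeds the integral of `f`, so `f` lies below the threshold
on a subset of `(λ, r)` of positive measure.
-/

open Set MeasureTheory
open scoped ENNReal

theorem measure_setOf_lt_pos_of_setLIntegral_lt {α : Type*} [MeasurableSpace α] {μ : Measure α}
    {s : Set α} (hs : NullMeasurableSet s μ) {f g : α → ℝ≥0∞}
    (hfg : ∫⁻ x in s, f x ∂μ < ∫⁻ x in s, g x ∂μ) : 0 < μ {x ∈ s | f x < g x} := by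
  refine pos_iff_ne_zero.mpr fun hnull => hfg.not_ge (lintegral_mono_ae ?_)
  rw [ae_restrict_iff'₀ hs, ae_iff]
  simpa only [Classical.not_imp, not_le] using hnull

theorem setLIntegral_Ioo_ofReal_mul_rpow {p c a b : ℝ} (hp : -1 < p) (hc : 0 ≤ c) (ha : 0 ≤ a)
    (hab : a ≤ b) :
    ∫⁻ t in Ioo a b, ENNReal.ofReal ((p + 1) * c * t ^ p) =
      ENNReal.ofReal (c * (b ^ (p + 1) - a ^ (p + 1))) := by
  have hp1 : 0 < p + 1 := neg_lt_iff_pos_add.mp hp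
  have hint : IntegrableOn (fun t : ℝ => (p + 1) * c * t ^ p) (Ioo a b) :=
    (intervalIntegrable_iff_integrableOn_Ioo_of_le hab).mp
      ((intervalIntegral.intervalIntegrable_rpow' hp).const_mul _)
  have hnonneg : 0 ≤ᵐ[volume.restrict (Ioo a b)] fun t : ℝ => (p + 1) * c * t ^ p := by
    filter_upwards [ae_restrict_mem measurableSet_Ioo] with t ht
    exact mul_nonneg (by positivity) (Real.rpow_nonneg (ha.trans ht.1.le) p)
  have hvalue : ∫ t in Ioo a b, (p + 1) * c * t ^ p = c * (b ^ (p + 1) - a ^ (p + 1)) := by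
    rw [← integral_Ioc_eq_integral_Ioo, ← intervalIntegral.integral_of_le hab,
      intervalIntegral.integral_const_mul, integral_rpow (Or.inl hp)]
    field_simp
  rw [← ofReal_integral_eq_lintegral_ofReal hint hnonneg, hvalue]

theorem volume_setOf_lt_mul_rpow_pos {p c a b : ℝ} (hp : -1 < p) (hc : 0 ≤ c) (ha : 0 ≤ a)
    (hab : a ≤ b) {f : ℝ → ℝ≥0∞}
    (hf : ∫⁻ t in Ioo a b, f t < ENNReal.ofReal (c * (b ^ (p + 1) - a ^ (p + 1)))) :
    0 < volume {t ∈ Ioo a b | f t < ENNReal.ofReal ((p + 1) * c * t ^ p)} :=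
  measure_setOf_lt_pos_of_setLIntegral_lt measurableSet_Ioo.nullMeasurableSet
    (hf.trans_eq (setLIntegral_Ioo_ofReal_mul_rpow hp hc ha hab).symm)

theorem mul_rpow_inv_rpow {x y q : ℝ} (hx : 0 ≤ x) (hy : 0 ≤ y) (hq : q ≠ 0) :
    (x * y ^ q⁻¹) ^ q = x ^ q * y := by
  rw [Real.mul_rpow hx (Real.rpow_nonneg hy _), Real.rpow_inv_rpow hy hq]

theorem ofReal_mul_one_sub_lt_ofReal_mul_one_sub_div_three_sq {m ε : ℝ} (hm : 0 < m)
    (hε0 : 0 < ε) (hε3 : ε < 3) :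
    ENNReal.ofReal (m * (1 - ε)) < ENNReal.ofReal (m * (1 - ε / 3) ^ 2) := by
  have hpos : 0 < 1 - ε / 3 := by linarith
  refine (ENNReal.ofReal_lt_ofReal_iff (by positivity)).mpr (mul_lt_mul_of_pos_left ?_ hm)
  nlinarith only [hε0]

theorem stmt12_general {p c δ r : ℝ} (hp : -1 < p) (hc : 0 ≤ c) (hδ : δ ∈ Icc (0 : ℝ) 1)
    (hr : 0 ≤ r) {f : ℝ → ℝ≥0∞}
    (hf : ∫⁻ t in Ioo 0 r, f t < ENNReal.ofReal (c * r ^ (p + 1) * (1 - δ) ^ 2)) :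
    0 < volume {t ∈ Ioo (r * δ ^ (p + 1)⁻¹) r |
      f t < ENNReal.ofReal ((p + 1) * c * t ^ p * (1 - δ))} := by
  obtain ⟨hδ0, hδ1⟩ := hδ
  have hp1 : 0 < p + 1 := neg_lt_iff_pos_add.mp hp
  set l := r * δ ^ (p + 1)⁻¹ with hl
  have hl0 : 0 ≤ l := by positivity
  have hlr : l ≤ r :=
    mul_le_of_le_one_right hr (Real.rpow_le_one hδ0 hδ1 (by positivity))
  have hmass : c * r ^ (p + 1) * (1 - δ) ^ 2 =
      c * (1 - δ) * (r ^ (p + 1) - l ^ (p + 1)) := by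
    rw [hl, mul_rpow_inv_rpow hr hδ0 hp1.ne']
    ring
  have hannulus : ∫⁻ t in Ioo l r, f t <
      ENNReal.ofReal (c * (1 - δ) * (r ^ (p + 1) - l ^ (p + 1))) :=
    (lintegral_mono_set (Ioo_subset_Ioo_left hl0)).trans_lt (hmass ▸ hf)
  simpa only [← mul_assoc, mul_right_comm _ (1 - δ)] using
    volume_setOf_lt_mul_rpow_pos hp (mul_nonneg hc (sub_nonneg.mpr hδ1)) hl0 hlr hannulus

/-- Let `n ≥ 0`, `c > 0`, `ε ∈ (0,1)`, `r > 0`, and let `f : (0,r) → [0,∞]` be measurable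
with `∫_0^r f ≤ c·r^{n+1}·(1−ε)`. Set `λ = r·(ε/3)^{1/(n+1)}`. Then the set
`{t ∈ (λ, r) | f t < (n+1)·c·t^n·(1−ε/3)}` has positive Lebesgue measure. -/
theorem stmt12 (n : ℕ) (c ε r : ℝ) (hc : 0 < c) (hε : ε ∈ Set.Ioo (0 : ℝ) 1) (hr : 0 < r)
    (f : ℝ → ℝ≥0∞) (hf : Measurable f)
    (hint : ∫⁻ t in Set.Ioo (0 : ℝ) r, f t ≤
      ENNReal.ofReal (c * r ^ (n + 1) * (1 - ε))) :
    0 < volume {t ∈ Set.Ioo (r * (ε / 3) ^ (((n : ℝ) + 1)⁻¹)) r |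
      f t < ENNReal.ofReal (((n : ℝ) + 1) * c * t ^ n * (1 - ε / 3))} := by
  obtain ⟨hε0, hε1⟩ := hε
  exact mod_cast stmt12_general (neg_one_lt_zero.trans_le n.cast_nonneg) hc.le
    ⟨by linarith, by linarith⟩ hr.le (mod_cast hint.trans_lt
      (ofReal_mul_one_sub_lt_ofReal_mul_one_sub_div_three_sq (by positivity) hε0 (by linarith)))
end

section
/- Let X be a compact metric space, μ a finite Borel measure on X, n ≥ 1 an integer, and r > 0. Assume that the function (x,t) ↦ μ(B(x,t)) is continuous on X × (0, r], where B(x,t) is the closed metric ball. Assume that for every x ∈ X there exists t ∈ (0, r] with μ(B(x,t)) < 2·t^n/n!. Then there exist τ ∈ (0, r] and ε > 0 such that for every x ∈ X there exists t ∈ [τ, r] with μ(B(x,t)) < (2·t^n/n!)·(1 − ε). -/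
/-!
Suppose `μ (closedBall x t)` is below a threshold `b t`. This strict inequality leaves room for a
factor `1 - ε`. It then persists, with the same `t` and `ε`, near `x`: for `y` close to `x`, the
ball `closedBall y t` lies in a slightly larger ball around `x`, whose measure is close to that of
`closedBall x t` by continuity from above. So the points admitting a scale `t ≥ τ` with slack `ε`
form open sets that cover the given compact set and grow as `τ` and `ε` decrease; by compactness a
single one of them already contains it.
-/

open Metric Set MeasureTheory
open scoped ENNReal

theorem exists_lt_ofReal_mul_one_sub {c : ℝ≥0∞} {a : ℝ} (h : c < ENNReal.ofReal a) :
    ∃ ε ∈ Ioc (0 : ℝ) 1, c < ENNReal.ofReal (a * (1 - ε)) := by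
  have hcont : Continuous fun ε : ℝ => ENNReal.ofReal (a * (1 - ε)) :=
    ENNReal.continuous_ofReal.comp (by fun_prop)
  have hnear : ∀ᶠ ε in nhdsWithin (0 : ℝ) (Ioi 0), c < ENNReal.ofReal (a * (1 - ε)) :=
    nhdsWithin_le_nhds (hcont.continuousAt.eventually (lt_mem_nhds (by simpa using h)))
  obtain ⟨ε, hlt, hε⟩ := (hnear.and (Ioc_mem_nhdsGT one_pos)).exists
  exact ⟨ε, hε, hlt⟩

theorem upperSemicontinuous_measure_closedBall {X : Type*} [PseudoMetricSpace X]
    [MeasurableSpace X] [OpensMeasurableSpace X] (μ : Measure X) [IsFiniteMeasure μ] (t : ℝ) :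
    UpperSemicontinuous fun x => μ (closedBall x t) := by
  intro x c hc
  have hlim : Filter.Tendsto (μ ∘ closedBall x) (nhdsWithin t (Ioi t))
      (nhds (μ (closedBall x t))) := by
    simpa only [biInter_gt_closedBall] using
      tendsto_measure_biInter_gt (fun _ _ => measurableSet_closedBall.nullMeasurableSet)
        (fun _ _ _ h => closedBall_subset_closedBall h) ⟨t + 1, lt_add_one t, measure_ne_top μ _⟩
  obtain ⟨s, hsc, hts⟩ := ((hlim.eventually_lt_const hc).and self_mem_nhdsWithin).exists
  filter_upwards [closedBall_mem_nhds x (sub_pos.mpr hts)] with y hy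
  have hsub : closedBall y t ⊆ closedBall x s :=
    closedBall_subset_closedBall' (le_sub_iff_add_le'.mp hy)
  exact (measure_mono hsub).trans_lt hsc

/-- The points `x` at which the quantity `f t x` falls below the threshold `b t` with relative
slack `ε` at some scale `t` between `τ` and `r`. It is meant for `0 < τ` and `0 < ε ≤ 1`, the
range in which it shrinks as `τ` and `ε` grow. The threshold is real, so that `ENNReal.ofReal`
truncates it at `0`. -/
def slackSet {X : Type*} (f : ℝ → X → ℝ≥0∞) (b : ℝ → ℝ) (r τ ε : ℝ) : Set X :=
  {x | ∃ t ∈ Icc τ r, f t x < ENNReal.ofReal (b t * (1 - ε))}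

namespace slackSet

variable {X : Type*} {f : ℝ → X → ℝ≥0∞} {b : ℝ → ℝ} {r τ τ' ε ε' : ℝ}

theorem anti (hτ : τ ≤ τ') (hε : ε ≤ ε') (hε' : ε' ≤ 1) :
    slackSet f b r τ' ε' ⊆ slackSet f b r τ ε := by
  rintro x ⟨t, ht, hlt⟩
  refine ⟨t, Icc_subset_Icc_left hτ ht, hlt.trans_le ?_⟩
  rw [ENNReal.ofReal_mul' (sub_nonneg.mpr hε'), ENNReal.ofReal_mul' (by linarith)]
  gcongr

variable [TopologicalSpace X]

theorem isOpen (hτ : 0 < τ) (hf : ∀ t ∈ Ioc 0 r, UpperSemicontinuous (f t)) :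
    IsOpen (slackSet f b r τ ε) := by
  have hunion : slackSet f b r τ ε =
      ⋃ t ∈ Icc τ r, f t ⁻¹' Iio (ENNReal.ofReal (b t * (1 - ε))) := by
    ext x
    simp only [slackSet, mem_ofPred_eq, mem_iUnion, mem_preimage, mem_Iio, exists_prop]
  rw [hunion]
  exact isOpen_biUnion fun t ht => (hf t ⟨hτ.trans_le ht.1, ht.2⟩).isOpen_preimage _

theorem exists_superset_of_isCompact {K : Set X} (hK : IsCompact K) (hr : 0 < r)
    (hf : ∀ t ∈ Ioc 0 r, UpperSemicontinuous (f t))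
    (hlt : ∀ x ∈ K, ∃ t ∈ Ioc 0 r, f t x < ENNReal.ofReal (b t)) :
    ∃ τ ∈ Ioc 0 r, ∃ ε ∈ Ioc (0 : ℝ) 1, K ⊆ slackSet f b r τ ε := by
  let U : Ioc 0 r × Ioc (0 : ℝ) 1 → Set X := fun p => slackSet f b r p.1 p.2
  have : Nonempty (Ioc 0 r × Ioc (0 : ℝ) 1) := ⟨⟨r, hr, le_rfl⟩, ⟨1, one_pos, le_rfl⟩⟩
  have hcover : K ⊆ ⋃ p, U p := by
    intro x hx
    obtain ⟨t, ht, hlt⟩ := hlt x hx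
    obtain ⟨ε, hε, hlt⟩ := exists_lt_ofReal_mul_one_sub hlt
    exact mem_iUnion.mpr ⟨(⟨t, ht⟩, ⟨ε, hε⟩), t, ⟨le_rfl, ht.2⟩, hlt⟩
  have hanti : Antitone U := fun _ q hpq => anti hpq.1 hpq.2 q.2.2.2
  obtain ⟨⟨⟨τ, hτ⟩, ⟨ε, hε⟩⟩, hKU⟩ :=
    hK.elim_directed_cover U (fun p => isOpen p.1.2.1 hf) hcover hanti.directed_le
  exact ⟨τ, hτ, ε, hε, hKU⟩

end slackSet

theorem stmt13_general {X : Type*} [PseudoMetricSpace X] [MeasurableSpace X]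
    [OpensMeasurableSpace X] (μ : Measure X) [IsFiniteMeasure μ] {K : Set X} (hK : IsCompact K)
    (b : ℝ → ℝ) {r : ℝ} (hr : 0 < r)
    (hsmall : ∀ x ∈ K, ∃ t ∈ Ioc 0 r, μ (closedBall x t) < ENNReal.ofReal (b t)) :
    ∃ τ ∈ Ioc 0 r, ∃ ε : ℝ, 0 < ε ∧ ∀ x ∈ K, ∃ t ∈ Icc τ r,
      μ (closedBall x t) < ENNReal.ofReal (b t * (1 - ε)) := by
  obtain ⟨τ, hτ, ε, hε, hKτε⟩ := slackSet.exists_superset_of_isCompact hK hr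
    (fun t _ => upperSemicontinuous_measure_closedBall μ t) hsmall
  exact ⟨τ, hτ, ε, hε.1, hKτε⟩

/-- Let `X` be a compact metric space, `μ` a finite Borel measure, `n ≥ 1`, `r > 0`.
Suppose `(x,t) ↦ μ(B(x,t))` is continuous on `X × (0,r]`, and for every `x` there is
`t ∈ (0,r]` with `μ(B(x,t)) < 2·t^n/n!`. Then there exist `τ ∈ (0,r]` and `ε > 0` such
that for every `x` there is `t ∈ [τ,r]` with `μ(B(x,t)) < (2·t^n/n!)·(1−ε)`. -/
theorem stmt13 {X : Type*} [MetricSpace X] [CompactSpace X]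
    [MeasurableSpace X] [BorelSpace X] (μ : Measure X) [IsFiniteMeasure μ]
    (n : ℕ) (hn : 1 ≤ n) (r : ℝ) (hr : 0 < r)
    (hcont : ContinuousOn (fun p : X × ℝ => μ (Metric.closedBall p.1 p.2))
      ((Set.univ : Set X) ×ˢ Set.Ioc 0 r))
    (hsmall : ∀ x : X, ∃ t ∈ Set.Ioc (0 : ℝ) r,
      μ (Metric.closedBall x t) < ENNReal.ofReal (2 * t ^ n / (n.factorial : ℝ))) :
    ∃ τ ∈ Set.Ioc (0 : ℝ) r, ∃ ε : ℝ, 0 < ε ∧ ∀ x : X, ∃ t ∈ Set.Icc τ r,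
      μ (Metric.closedBall x t) <
        ENNReal.ofReal (2 * t ^ n / (n.factorial : ℝ) * (1 - ε)) := by
  simpa only [mem_univ, true_imp_iff] using
    stmt13_general μ isCompact_univ (fun t => 2 * t ^ n / n.factorial) hr fun x _ => hsmall x
end

section
/- Let X be a metric space with the property that for every pair of points x, y ∈ X and every η > 0 there exists a continuous path from x to y of length at most d(x,y) + η. Let p ∈ X, s > 0, and δ > 0. Assume that every closed rectifiable curve in X of length less than 2s + 2δ is null-homotopic in X. Then every closed rectifiable curve whose image is contained in the closed metric ball B(p, s) is null-homotopic in X. -/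
open Metric Set unitInterval
open scoped ENNReal

/-!
Put `r = s + δ`, so that every point of `B(p, s)` is joined to `p` by a path of length less than
`r`. Two such short paths to the same point form a loop of length less than `2 r`, so they are
homotopic: every point of the curve `γ` carries a single homotopy class of short paths from `p`.
If `u` is close to `t`, the arc of `γ` from `γ t` to `γ u` is so short that a short path to `γ t`
followed by this arc is still short. Hence transport along `γ` preserves the class of short paths
locally, and by connectedness of `[0, 1]` globally. Around a loop `γ` this says `q · γ ≃ q` for a
short path `q` from `p` to the base point, and cancelling `q` shows that `γ` is null-homotopic.
-/

open Filter Topology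

section Length

variable {X : Type*} [PseudoEMetricSpace X] {x y z : X}

/-- The length of a path, in the sense of metric geometry: its total variation, with the value `⊤`
for paths that are not rectifiable. -/
noncomputable def pathLength (γ : Path x y) : ℝ≥0∞ :=
  eVariationOn (fun t => γ t) univ

lemma eVariationOn_extend_eq_pathLength (γ : Path x y) {s : Set ℝ} (hs : Icc 0 1 ⊆ s) :
    eVariationOn γ.extend s = pathLength γ := by
  have himage : projIcc (0 : ℝ) 1 zero_le_one '' s = univ :=
    eq_univ_of_forall fun t => ⟨t, hs t.2, projIcc_val _ t⟩
  rw [pathLength, ← himage]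
  exact eVariationOn.comp_eq_of_monotoneOn γ _ ((monotone_projIcc _).monotoneOn s)

lemma pathLength_trans (γ : Path x y) (γ' : Path y z) :
    pathLength (γ.trans γ') = pathLength γ + pathLength γ' := by
  have hleft : eVariationOn (γ.trans γ').extend (Iic (1 / 2)) = pathLength γ := by
    rw [eVariationOn.congr fun t ht => Path.extend_trans_of_le_half γ γ' (mem_Iic.1 ht)]
    refine (eVariationOn.comp_eq_of_monotoneOn γ.extend (fun t : ℝ => 2 * t)
      fun t _ u _ htu => by linarith).trans (eVariationOn_extend_eq_pathLength γ ?_)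
    exact fun t ht => ⟨t / 2, by rw [mem_Iic]; linarith [ht.2], by ring⟩
  have hright : eVariationOn (γ.trans γ').extend (Ici (1 / 2)) = pathLength γ' := by
    rw [eVariationOn.congr fun t ht => Path.extend_trans_of_half_le γ γ' (mem_Ici.1 ht)]
    refine (eVariationOn.comp_eq_of_monotoneOn γ'.extend (fun t : ℝ => 2 * t - 1)
      fun t _ u _ htu => by linarith).trans (eVariationOn_extend_eq_pathLength γ' ?_)
    exact fun t ht => ⟨(t + 1) / 2, by rw [mem_Ici]; linarith [ht.1], by ring⟩
  rw [← eVariationOn_extend_eq_pathLength _ (subset_univ _), ← Iic_union_Ici (a := (1 / 2 : ℝ)),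
    eVariationOn.union _ isGreatest_Iic isLeast_Ici, hleft, hright]

lemma pathLength_symm (γ : Path x y) : pathLength γ.symm = pathLength γ := by
  refine (eVariationOn.comp_eq_of_antitoneOn γ σ (strictAnti_symm.antitone.antitoneOn _)).trans ?_
  rw [image_univ, symm_bijective.surjective.range_eq, pathLength]

lemma monotone_convexComb {a b : ℝ} {t u : Icc a b} (htu : t ≤ u) :
    Monotone (Icc.convexComb t u) := by
  intro v w hvw
  have hslope : (0 : ℝ) ≤ u - t := sub_nonneg.2 htu
  rw [← Subtype.coe_le_coe] at hvw ⊢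
  rw [Icc.coe_convexComb, Icc.coe_convexComb]
  linarith [mul_le_mul_of_nonneg_right hvw hslope]

lemma pathLength_subpath_of_le (γ : Path x y) {t u : I} (htu : t ≤ u) :
    pathLength (γ.subpath t u) = eVariationOn γ (Icc t u) := by
  refine (eVariationOn.comp_eq_of_monotoneOn γ (Icc.convexComb t u) ?_).trans ?_
  · exact (monotone_convexComb htu).monotoneOn _
  · rw [image_univ, Path.range_subpathAux, uIcc_of_le htu]

lemma pathLength_subpath_comm (γ : Path x y) (t u : I) :
    pathLength (γ.subpath t u) = pathLength (γ.subpath u t) := by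
  rw [← γ.symm_subpath t u, pathLength_symm]

lemma tendsto_pathLength_subpath {γ : Path x y} (hγ : pathLength γ ≠ ⊤) (t : I) :
    Tendsto (fun u => pathLength (γ.subpath t u)) (𝓝 t) (𝓝 0) := by
  have hbv : BoundedVariationOn γ univ := hγ
  have hleft := hbv.tendsto_eVariationOn_Icc_zero_left (x := t) γ.continuous.continuousWithinAt
  have hright := hbv.tendsto_eVariationOn_Icc_zero_right t γ.continuous.continuousWithinAt
  simp only [univ_inter, nhdsWithin_univ] at hleft hright
  refine tendsto_of_tendsto_of_tendsto_of_le_of_le tendsto_const_nhds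
    (by simpa using hleft.add hright) (fun _ => zero_le) fun u => ?_
  rcases le_total u t with hut | htu
  · rw [pathLength_subpath_comm, pathLength_subpath_of_le γ hut]
    exact le_self_add
  · rw [pathLength_subpath_of_le γ htu]
    exact le_add_self

end Length

section Homotopy

variable {X : Type*} [TopologicalSpace X] {x y : X}

lemma homotopic_of_trans_symm_homotopic_refl {γ γ' : Path x y}
    (h : (γ.trans γ'.symm).Homotopic (Path.refl x)) : γ.Homotopic γ' := by
  have h' := congrArg (Path.Homotopic.Quotient.trans · (.mk γ')) (Path.Homotopic.Quotient.eq.2 h)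
  rw [← Path.Homotopic.Quotient.eq]
  simpa [Path.Homotopic.Quotient.trans_assoc] using h'

lemma homotopic_refl_of_trans_homotopic_self {q : Path x y} {γ : Path y y}
    (h : (q.trans γ).Homotopic q) : γ.Homotopic (Path.refl y) := by
  have h' := congrArg (Path.Homotopic.Quotient.trans (.mk q.symm)) (Path.Homotopic.Quotient.eq.2 h)
  rw [← Path.Homotopic.Quotient.eq]
  simpa [← Path.Homotopic.Quotient.trans_assoc] using h'

end Homotopy

section ShortPaths

variable {X : Type*} [PseudoEMetricSpace X] {p x y : X} {r : ℝ≥0∞}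

lemma homotopic_of_pathLength_lt
    (hnull : ∀ γ : Path p p, pathLength γ < 2 * r → γ.Homotopic (Path.refl p))
    {q q' : Path p x} (hq : pathLength q < r) (hq' : pathLength q' < r) : q.Homotopic q' := by
  refine homotopic_of_trans_symm_homotopic_refl (hnull _ ?_)
  rw [pathLength_trans, pathLength_symm, two_mul]
  exact ENNReal.add_lt_add hq hq'

lemma trans_subpath_homotopic_of_pathLength_lt
    (hnull : ∀ γ : Path p p, pathLength γ < 2 * r → γ.Homotopic (Path.refl p))
    {γ : Path x y} (hγ : pathLength γ ≠ ⊤) {q : ∀ t, Path p (γ t)}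
    (hq : ∀ t, pathLength (q t) < r) (t u : I) :
    ((q t).trans (γ.subpath t u)).Homotopic (q u) := by
  refine isPreconnected_univ.induction₂
    (fun t u => ((q t).trans (γ.subpath t u)).Homotopic (q u)) ?_ ?_ ?_ (mem_univ t) (mem_univ u)
  · intro t _
    have hlim := (tendsto_pathLength_subpath hγ t).const_add (pathLength (q t))
    rw [add_zero] at hlim
    rw [nhdsWithin_univ]
    filter_upwards [hlim.eventually_lt_const (hq t)] with u hu
    exact homotopic_of_pathLength_lt hnull ((pathLength_trans _ _).trans_lt hu) (hq u)
  · intro t u v _ _ _ htu huv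
    have hsub : ((γ.subpath t u).trans (γ.subpath u v)).Homotopic (γ.subpath t v) :=
      ⟨Path.Homotopy.subpathTransSubpath γ t u v⟩
    rw [← Path.Homotopic.Quotient.eq] at htu huv hsub ⊢
    simp only [Path.Homotopic.Quotient.mk_trans] at htu huv hsub ⊢
    rw [← hsub, ← Path.Homotopic.Quotient.trans_assoc, htu, huv]
  · intro t u _ _ htu
    rw [← Path.Homotopic.Quotient.eq, Path.Homotopic.Quotient.mk_trans] at htu ⊢
    rw [← htu, ← γ.symm_subpath t u, Path.Homotopic.Quotient.mk_symm,
      Path.Homotopic.Quotient.trans_assoc, Path.Homotopic.Quotient.trans_symm,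
      Path.Homotopic.Quotient.trans_refl]

lemma trans_homotopic_of_pathLength_lt
    (hnull : ∀ γ : Path p p, pathLength γ < 2 * r → γ.Homotopic (Path.refl p))
    {γ : Path x y} (hγ : pathLength γ ≠ ⊤)
    (hshort : ∀ t, ∃ q : Path p (γ t), pathLength q < r)
    {q : Path p x} (hq : pathLength q < r) {q' : Path p y} (hq' : pathLength q' < r) :
    (q.trans γ).Homotopic q' := by
  choose spoke hspoke using hshort
  -- Destructuring `γ` makes `γ 0` and `γ 1` definitionally equal to its endpoints.
  obtain ⟨f, rfl, rfl⟩ := γ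
  have htransport := trans_subpath_homotopic_of_pathLength_lt hnull hγ hspoke 0 1
  rw [Path.subpath_zero_one] at htransport
  have hstart : q.Homotopic (spoke 0) := homotopic_of_pathLength_lt hnull hq (hspoke 0)
  have hend : (spoke 1).Homotopic q' := homotopic_of_pathLength_lt hnull (hspoke 1) hq'
  exact ((hstart.hcomp (.refl _)).trans htransport).trans hend

end ShortPaths

lemma exists_pathLength_lt_ofReal_of_dist_lt {X : Type*} [PseudoMetricSpace X] {p y : X} {r : ℝ}
    (hpath : ∀ η : ℝ, 0 < η → ∃ γ : Path p y, pathLength γ ≤ ENNReal.ofReal (dist p y + η))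
    (hr : dist p y < r) : ∃ q : Path p y, pathLength q < ENNReal.ofReal r := by
  obtain ⟨η, hη, hηr⟩ := exists_between (sub_pos.2 hr)
  obtain ⟨q, hq⟩ := hpath η hη
  have hr0 : 0 < r := dist_nonneg.trans_lt hr
  exact ⟨q, hq.trans_lt ((ENNReal.ofReal_lt_ofReal_iff hr0).2 (lt_sub_iff_add_lt'.1 hηr))⟩

theorem stmt14_general {X : Type*} [PseudoEMetricSpace X] {p x : X} {r : ℝ≥0∞}
    (hnull : ∀ γ : Path p p, pathLength γ < 2 * r → γ.Homotopic (Path.refl p))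
    {γ : Path x x} (hγ : pathLength γ ≠ ⊤)
    (hshort : ∀ t, ∃ q : Path p (γ t), pathLength q < r) :
    γ.Homotopic (Path.refl x) := by
  obtain ⟨q, hq⟩ : ∃ q : Path p x, pathLength q < r := γ.source ▸ hshort 0
  exact homotopic_refl_of_trans_homotopic_self
    (trans_homotopic_of_pathLength_lt hnull hγ hshort hq hq)

/-- Let `X` be a metric space in which any two points `x, y` can be joined, for every
`η > 0`, by a continuous path of length at most `dist x y + η` (length = total variation).
Let `p ∈ X`, `s > 0`, `δ > 0`. If every closed rectifiable curve in `X` of length less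
than `2s + 2δ` is null-homotopic, then every closed rectifiable curve whose image lies in
the closed ball `B(p, s)` is null-homotopic. -/
theorem stmt14 {X : Type*} [MetricSpace X]
    (hpath : ∀ (x y : X) (η : ℝ), 0 < η → ∃ γ : Path x y,
      eVariationOn (fun t => γ t) (Set.univ : Set unitInterval) ≤
        ENNReal.ofReal (dist x y + η))
    (p : X) (s δ : ℝ) (hs : 0 < s) (hδ : 0 < δ)
    (hnull : ∀ (x : X) (γ : Path x x),
      eVariationOn (fun t => γ t) (Set.univ : Set unitInterval) <
        ENNReal.ofReal (2 * s + 2 * δ) →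
      γ.Homotopic (Path.refl x)) :
    ∀ (x : X) (γ : Path x x),
      eVariationOn (fun t => γ t) (Set.univ : Set unitInterval) ≠ ⊤ →
      (∀ t : unitInterval, γ t ∈ Metric.closedBall p s) →
      γ.Homotopic (Path.refl x) := by
  intro x γ hγ hball
  have hdist (t : I) : dist p (γ t) < s + δ := by linarith [mem_closedBall'.1 (hball t)]
  refine stmt14_general (r := ENNReal.ofReal (s + δ)) (fun β hβ => hnull p β ?_) hγ
    fun t => exists_pathLength_lt_ofReal_of_dist_lt (hpath p (γ t)) (hdist t)
  rwa [← mul_add, ENNReal.ofReal_mul zero_le_two, ENNReal.ofReal_ofNat]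
end

section
/- Let X be a metric space, Z a compact subset of X, n ≥ 1 an integer, and δ > 0. Let V₁, …, V_k be finitely many sets, each open in Z, which cover Z, such that no n+1 of them have a common point, and such that each V_i is contained in a closed metric ball of X of radius r_i. Then there exist open subsets U₁, …, U_k of X such that U_i ⊇ V_i' for a closed shrinking covering Z (in particular U₁, …, U_k cover Z), each U_i is contained in a closed metric ball of X of radius r_i + δ, and no n+1 of the sets U₁, …, U_k have a common point. -/
/-!
A point `x` of the ambient space is put in the expansion of a relatively open `A ⊆ Z` when `x` is
strictly closer to `Z` than to `Z \ A`. If `x` lies in the expansions of finitely many `V i`, then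
some point `z` of `Z` is closer to `x` than every one of the sets `Z \ V i`. Such a `z` lies in all
of these `V i`, so expanding does not raise the multiplicity. Cutting down to the `δ`-thickening of
`V i` controls the radii.
-/

open Metric Set
open scoped ENNReal

theorem encard_le_of_forall_finite_subset {α : Type*} {s : Set α} {n : ℕ}
    (h : ∀ t ⊆ s, t.Finite → t.encard ≤ n) : s.encard ≤ n := by
  by_contra! hlt
  obtain ⟨t, hts, ht⟩ := exists_subset_encard_eq (Order.add_one_le_of_lt hlt)
  have htfin : t.Finite := finite_of_encard_eq_coe (k := n + 1) (by exact_mod_cast ht)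
  have hle : n + 1 ≤ n := by exact_mod_cast ht ▸ h t hts htfin
  exact n.not_succ_le_self hle

theorem thickening_closedBall_subset_ball {X : Type*} [PseudoMetricSpace X] (x : X) (ε δ : ℝ) :
    thickening ε (closedBall x δ) ⊆ ball x (ε + δ) := by
  intro y hy
  obtain ⟨z, hzx, hyz⟩ := mem_thickening_iff.1 hy
  calc dist y x ≤ dist y z + dist z x := dist_triangle y z x
    _ < ε + δ := add_lt_add_of_lt_of_le hyz hzx

section OpenExtension

variable {X ι : Type*} [PseudoEMetricSpace X] {Z : Set X}

/-- The canonical extension of a relatively open subset `A` of `Z` to an open subset of the ambient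
space: the points strictly closer to `Z` than to `Z \ A`. Distances take values in `ℝ≥0∞`, so that
the distance to `Z \ A` is `∞` when `A = Z`. -/
def openExtension (Z A : Set X) : Set X :=
  {x | infEDist x Z < infEDist x (Z \ A)}

theorem isOpen_openExtension (Z A : Set X) : IsOpen (openExtension Z A) :=
  isOpen_lt continuous_infEDist continuous_infEDist

theorem openExtension_inter_self {W : Set X} (hW : IsOpen W) :
    openExtension Z (W ∩ Z) ∩ Z = W ∩ Z := by
  ext x
  refine and_congr_left fun hxZ => ?_
  change infEDist x Z < infEDist x (Z \ (W ∩ Z)) ↔ x ∈ W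
  rw [infEDist_zero_of_mem hxZ, infEDist_pos_iff_notMem_closure, sdiff_inter_self_eq_sdiff]
  refine ⟨fun hx => ?_, fun hxW hx => ?_⟩
  · by_contra hxW
    exact hx (subset_closure ⟨hxZ, hxW⟩)
  · have hclosure : closure (Z \ W) ⊆ Wᶜ :=
      closure_minimal (fun _ hy => hy.2) hW.isClosed_compl
    exact hclosure hx hxW

theorem inter_biInter_nonempty_of_mem_openExtension {V : ι → Set X} {s : Set ι} (hs : s.Finite)
    (hne : s.Nonempty) {x : X} (hx : ∀ i ∈ s, x ∈ openExtension Z (V i)) :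
    (Z ∩ ⋂ i ∈ s, V i).Nonempty := by
  obtain ⟨j, hj, hmin⟩ := s.exists_min_image (fun i => infEDist x (Z \ V i)) hs hne
  obtain ⟨z, hz, hxz⟩ := infEDist_lt_iff.1 (hx j hj)
  refine ⟨z, hz, mem_iInter₂.2 fun i hi => ?_⟩
  by_contra hzi
  have hle : infEDist x (Z \ V i) ≤ edist x z := infEDist_le_edist_of_mem ⟨hz, hzi⟩
  exact (hxz.trans_le (hmin i hi)).not_ge hle

theorem encard_mem_openExtension_le {V : ι → Set X} {n : ℕ}
    (hV : ∀ z ∈ Z, {i | z ∈ V i}.encard ≤ n) (x : X) :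
    {i | x ∈ openExtension Z (V i)}.encard ≤ n := by
  refine encard_le_of_forall_finite_subset fun t ht htfin => ?_
  rcases t.eq_empty_or_nonempty with rfl | hne
  · simp
  · obtain ⟨z, hz, hzV⟩ := inter_biInter_nonempty_of_mem_openExtension htfin hne ht
    exact (encard_le_encard (mem_iInter₂.1 hzV)).trans (hV z hz)

end OpenExtension

theorem stmt15_general {X ι : Type*} [PseudoMetricSpace X] (Z : Set X) (n : ℕ) (δ : ℝ) (hδ : 0 < δ)
    (V : ι → Set X) (rad : ι → ℝ)
    (hopen : ∀ i, ∃ W : Set X, IsOpen W ∧ V i = W ∩ Z)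
    (hmult : ∀ x : X, {i | x ∈ V i}.encard ≤ n)
    (hrad : ∀ i, ∃ c : X, V i ⊆ closedBall c (rad i)) :
    ∃ U : ι → Set X, (∀ i, IsOpen (U i)) ∧ (∀ i, U i ∩ Z = V i) ∧
      (∀ i, ∃ c : X, U i ⊆ closedBall c (rad i + δ)) ∧
      (∀ x : X, {i | x ∈ U i}.encard ≤ n) := by
  refine ⟨fun i => openExtension Z (V i) ∩ thickening δ (V i), fun i => ?_, fun i => ?_,
    fun i => ?_, fun x => ?_⟩
  · exact (isOpen_openExtension Z (V i)).inter isOpen_thickening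
  · have hext : openExtension Z (V i) ∩ Z = V i := by
      obtain ⟨W, hW, hVW⟩ := hopen i
      rw [hVW, openExtension_inter_self hW]
    rw [inter_right_comm, hext, inter_eq_left]
    exact self_subset_thickening hδ (V i)
  · obtain ⟨c, hc⟩ := hrad i
    refine ⟨c, inter_subset_right.trans ?_⟩
    rw [add_comm]
    exact (thickening_subset_of_subset δ hc).trans
      ((thickening_closedBall_subset_ball c δ (rad i)).trans ball_subset_closedBall)
  · have hsub : {i | x ∈ openExtension Z (V i) ∩ thickening δ (V i)} ⊆
        {i | x ∈ openExtension Z (V i)} := fun _ hi => hi.1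
    exact (encard_le_encard hsub).trans (encard_mem_openExtension_le (fun z _ => hmult z) x)

/-- Covering-expansion step: let `Z` be a compact subset of a metric space `X`, `n ≥ 1`,
`δ > 0`, and let `V₁, …, V_k` be finitely many sets, open in `Z`, covering `Z`, with
multiplicity at most `n`, such that each `V i` lies in a closed ball of radius `rad i`.
Then there are open subsets `U₁, …, U_k` of `X` covering `Z`, each `U i` contained in a
closed ball of radius `rad i + δ`, with multiplicity at most `n`. -/
theorem stmt15 {X : Type*} [MetricSpace X] (Z : Set X) (hZ : IsCompact Z)
    (n : ℕ) (hn : 1 ≤ n) (δ : ℝ) (hδ : 0 < δ)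
    (k : ℕ) (V : Fin k → Set X) (rad : Fin k → ℝ)
    (hopen : ∀ i, ∃ W : Set X, IsOpen W ∧ V i = W ∩ Z)
    (hcover : Z ⊆ ⋃ i, V i)
    (hmult : ∀ x : X, {i | x ∈ V i}.encard ≤ n)
    (hrad : ∀ i, ∃ c : X, V i ⊆ Metric.closedBall c (rad i)) :
    ∃ U : Fin k → Set X, (∀ i, IsOpen (U i)) ∧ Z ⊆ ⋃ i, U i ∧
      (∀ i, ∃ c : X, U i ⊆ Metric.closedBall c (rad i + δ)) ∧
      (∀ x : X, {i | x ∈ U i}.encard ≤ n) := by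
  obtain ⟨U, hUopen, hUZ, hU⟩ := stmt15_general Z n δ hδ V rad hopen hmult hrad
  exact ⟨U, hUopen, hcover.trans (iUnion_mono fun i => hUZ i ▸ inter_subset_left), hU⟩
end

section
/- Let X be the interval [0,1] with the standard metric, and let Y = A = (0,1]. Then the 1-dimensional Hausdorff content of A in X equals 1/2, while for every s ∈ (0,1) the metric sphere S(0,s) = {y ∈ [0,1] : |y| = s} satisfies HC_0(S(0,s) ∩ Y) = 1 = 2·HC_1(A ∩ Y). Consequently the constant 2 in the coarea inequality for Hausdorff content (which asserts the existence of s ∈ (r₁,r₂) with HC_{m−1}(S_s ∩ Y) ≤ (2/(r₂−r₁))·HC_m(A ∩ Y), here with m = 1, r₁ = 0, r₂ = 1, x = 0) cannot be replaced by any smaller constant. -/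
/-!
Both lower bounds come from the mass distribution principle: an outer measure `μ` with
`μ (closedBall x r) ≤ c * r ^ m` for all balls satisfies `μ A ≤ c * HC m A`, by countable
subadditivity over a cover of `A`. Lebesgue measure, with `m = 1` and `c = 2`, gives
`b - a ≤ 2 * HC 1 (Ioc a b)`, and the ball centred at the midpoint attains equality. A Dirac mass,
with `m = 0` and `c = 1`, gives `1 ≤ HC 0 {x}`, and the sphere about an endpoint of an interval is
a single point.
-/

open Metric Set
open scoped ENNReal NNReal

open MeasureTheory

section HausdorffContent

variable {X : Type*} [MetricSpace X] {m : ℝ} {A : Set X}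

lemma HC_le_of_subset_closedBall {x : X} {r : ℝ≥0} (h : A ⊆ closedBall x r) :
    HC m A ≤ (r : ℝ≥0∞) ^ m :=
  calc HC m A ≤ ∑' p : ({(x, r)} : Set (X × ℝ≥0)), ((p : X × ℝ≥0).2 : ℝ≥0∞) ^ m :=
        iInf_le_of_le {(x, r)} <| iInf₂_le (countable_singleton _) (by simpa using h)
    _ = (r : ℝ≥0∞) ^ m := tsum_singleton (x, r) fun p : X × ℝ≥0 ↦ (p.2 : ℝ≥0∞) ^ m

theorem outerMeasure_le_mul_HC {μ : OuterMeasure X} {c : ℝ≥0∞} (hc₀ : c ≠ 0) (hc : c ≠ ∞)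
    (hμ : ∀ (x : X) (r : ℝ≥0), μ (closedBall x r) ≤ c * (r : ℝ≥0∞) ^ m) :
    μ A ≤ c * HC m A := by
  simp only [HC, ENNReal.mul_iInf_of_ne hc₀ hc]
  refine le_iInf₂ fun S hS ↦ le_iInf fun hcover ↦ ?_
  calc μ A ≤ μ (⋃ p ∈ S, closedBall p.1 p.2) := measure_mono hcover
    _ ≤ ∑' p : S, μ (closedBall p.1.1 p.1.2) := measure_biUnion_le μ hS _
    _ ≤ ∑' p : S, c * (p.1.2 : ℝ≥0∞) ^ m := ENNReal.tsum_le_tsum fun p ↦ hμ p.1.1 p.1.2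
    _ = c * ∑' p : S, (p.1.2 : ℝ≥0∞) ^ m := ENNReal.tsum_mul_left

theorem volume_image_le_mul_HC_one {f : X → ℝ} {K : ℝ≥0} (hf : LipschitzWith K f) :
    volume (f '' A) ≤ 2 * K * HC 1 A := by
  rcases eq_or_ne K 0 with rfl | hK
  · have hconst : (f '' A).Subsingleton := by
      rintro _ ⟨x, -, rfl⟩ _ ⟨y, -, rfl⟩
      exact dist_le_zero.1 (by simpa using hf.dist_le_mul x y)
    simp [hconst.measure_zero volume]
  · refine outerMeasure_le_mul_HC (μ := OuterMeasure.comap f volume.toOuterMeasure)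
      (by simpa using hK) (by finiteness) fun x r ↦ ?_
    calc volume (f '' closedBall x r) ≤ volume (closedBall (f x) (K * r)) :=
          measure_mono (hf.mapsTo_closedBall x r).image_subset
      _ = 2 * K * (r : ℝ≥0∞) ^ (1 : ℝ) := by
          simp [Real.volume_closedBall, ENNReal.ofReal_mul, mul_assoc]

lemma one_le_HC_zero (hA : A.Nonempty) : 1 ≤ HC 0 A := by
  obtain ⟨x, hx⟩ := hA
  have hball (y : X) (r : ℝ≥0) :
      OuterMeasure.dirac x (closedBall y r) ≤ 1 * (r : ℝ≥0∞) ^ (0 : ℝ) := by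
    simpa using indicator_le_self' (fun _ _ ↦ zero_le_one) x
  simpa [hx] using outerMeasure_le_mul_HC (A := A) one_ne_zero ENNReal.one_ne_top hball

lemma HC_zero_singleton (x : X) : HC 0 {x} = 1 := by
  refine le_antisymm ?_ (one_le_HC_zero (singleton_nonempty x))
  -- `0 ^ 0 = 1`: a ball of radius `0` still counts once.
  simpa using HC_le_of_subset_closedBall (m := 0) (A := {x}) (x := x) (r := 0) (by simp)

end HausdorffContent

section Interval

variable {a b : ℝ}

lemma HC_one_setOf_left_lt (hab : a ≤ b) :
    HC 1 {y : Icc a b | a < (y : ℝ)} = ENNReal.ofReal (b - a) / 2 := by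
  apply le_antisymm
  · have hball : {y : Icc a b | a < (y : ℝ)} ⊆
        closedBall ⟨(a + b) / 2, by linarith, by linarith⟩ ((b - a) / 2).toNNReal := by
      intro y _
      rw [Real.coe_toNNReal _ (by linarith), ← Subtype.preimage_closedBall,
        ← Real.Icc_eq_closedBall]
      exact y.2
    calc HC 1 {y : Icc a b | a < (y : ℝ)}
        ≤ ENNReal.ofReal ((b - a) / 2) ^ (1 : ℝ) := HC_le_of_subset_closedBall hball
      _ = ENNReal.ofReal (b - a) / 2 := by simp [ENNReal.ofReal_div_of_pos]
  · have himage : (↑) '' {y : Icc a b | a < (y : ℝ)} = Ioc a b := by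
      ext t
      simpa using fun (h : a < t) _ ↦ h.le
    refine ENNReal.div_le_of_le_mul' ?_
    simpa [himage] using volume_image_le_mul_HC_one (A := {y : Icc a b | a < (y : ℝ)})
      (LipschitzWith.subtype_val (Icc a b))

lemma setOf_dist_left_eq_singleton {x : Icc a b} {s : ℝ} (hx : (x : ℝ) = a + s) :
    {y : Icc a b | dist y ⟨a, le_rfl, x.2.1.trans x.2.2⟩ = s} = {x} := by
  ext y
  have hdist : dist (y : ℝ) a = y - a := by
    rw [Real.dist_eq, abs_of_nonneg (sub_nonneg.2 y.2.1)]
  simp only [mem_ofPred_eq, mem_singleton_iff, Subtype.dist_eq, Subtype.ext_iff, hdist, hx,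
    sub_eq_iff_eq_add']

end Interval

/-- Optimality of the constant `2` in the coarea inequality for Hausdorff content:
in `X = [0,1]` with the standard metric, the subset `A = Y = (0,1]` has
`HC_1(A) = 1/2`, while for every `s ∈ (0,1)` the metric sphere `S(0,s)` satisfies
`HC_0(S(0,s) ∩ Y) = 1 = 2·HC_1(A ∩ Y)` (here `m = 1`, `r₁ = 0`, `r₂ = 1`, `x = 0`),
so no constant smaller than `2` works. -/
theorem stmt16 :
    HC 1 ({y : Set.Icc (0 : ℝ) 1 | 0 < (y : ℝ)}) = 2⁻¹ ∧
    (∀ s : ℝ, 0 < s → s < 1 →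
      HC 0 ({y : Set.Icc (0 : ℝ) 1 |
          dist y (⟨0, by norm_num⟩ : Set.Icc (0 : ℝ) 1) = s} ∩
        {y : Set.Icc (0 : ℝ) 1 | 0 < (y : ℝ)}) = 1) ∧
    (1 : ℝ≥0∞) = 2 * HC 1 ({y : Set.Icc (0 : ℝ) 1 | 0 < (y : ℝ)}) := by
  have hHC : HC 1 {y : Icc (0 : ℝ) 1 | 0 < (y : ℝ)} = 2⁻¹ := by
    simpa using HC_one_setOf_left_lt (zero_le_one' ℝ)
  refine ⟨hHC, fun s hs₀ hs₁ ↦ ?_, ?_⟩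
  · let x : Icc (0 : ℝ) 1 := ⟨s, hs₀.le, hs₁.le⟩
    have hx : x ∈ {y : Icc (0 : ℝ) 1 | 0 < (y : ℝ)} := hs₀
    rw [setOf_dist_left_eq_singleton (x := x) (zero_add s).symm, singleton_inter_of_mem hx,
      HC_zero_singleton]
  · rw [hHC, ENNReal.mul_inv_cancel two_ne_zero ENNReal.ofNat_ne_top]
end
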